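/- (Klivans–Swartz relation) Let 𝒜 be a hyperplane arrangement in ℝ^n and d the common dimension of its minimal flats. For every j with 0 ≤ j ≤ rk(𝒜), the coefficient of t^j in the characteristic polynomial χ(𝒜, t) equals (−1)^{rk(𝒜) − j} Σ_C v_{j+d}(cl C), where the sum is over all chambers C of 𝒜. -/

import Mathlib

open Finset MeasureTheory

noncomputable section

namespace CharElts

/-- Ambient Euclidean space `ℝ^n`. -/
abbrev V (n : ℕ) := EuclideanSpace ℝ (Fin n)

/-- An affine functional on `ℝ^n`; a hyperplane is its zero set. -/
abbrev AffForm (n : ℕ) := V n →ᵃ[ℝ] ℝ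

/-- The hyperplane determined by an affine functional. -/
def hypSet {n : ℕ} (ℓ : AffForm n) : Set (V n) := {x | ℓ x = 0}

variable {n : ℕ} (𝒜 : Finset (AffForm n))

/-- Index type for the hyperplanes of the arrangement. -/
abbrev Idx := {ℓ : AffForm n // ℓ ∈ 𝒜}

/-- The (possibly empty) set cut out by a sign vector `σ`. -/
def faceSet (σ : Idx 𝒜 → SignType) : Set (V n) :=
  {x | ∀ ℓ : Idx 𝒜, SignType.sign (ℓ.1 x) = σ ℓ}

/-- A face of the arrangement: a sign vector whose face set is nonempty. -/
@[ext] structure Face where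
  sgn : Idx 𝒜 → SignType
  nonempty : (faceSet 𝒜 sgn).Nonempty

open Classical in
instance : Fintype (Face 𝒜) :=
  Fintype.ofInjective Face.sgn (fun F G h => by cases F; cases G; simpa using h)

/-- The underlying point set of a face. -/
def Face.carrier (F : Face 𝒜) : Set (V n) := faceSet 𝒜 F.sgn

/-- A flat: a nonempty intersection of some subcollection of the hyperplanes
(the empty intersection gives all of `ℝ^n`). -/
def IsFlat (X : Set (V n)) : Prop :=
  X.Nonempty ∧ ∃ P : Idx 𝒜 → Prop, X = ⋂ ℓ ∈ {ℓ : Idx 𝒜 | P ℓ}, hypSet ℓ.1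

/-- The poset of flats, ordered by inclusion. -/
def Flat := {X : Set (V n) // IsFlat 𝒜 X}

instance : PartialOrder (Flat 𝒜) :=
  inferInstanceAs (PartialOrder {X : Set (V n) // IsFlat 𝒜 X})

lemma flat_eq_inter (X : Flat 𝒜) :
    X.1 = ⋂ ℓ ∈ {ℓ : Idx 𝒜 | X.1 ⊆ hypSet ℓ.1}, hypSet ℓ.1 := by
  obtain ⟨Z, hne, P, rfl⟩ := X
  apply subset_antisymm
  · intro x hx
    simp only [Set.mem_iInter, Set.mem_setOf_eq]
    intro ℓ hℓ
    exact hℓ hx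
  · intro x hx
    simp only [Set.mem_iInter, Set.mem_setOf_eq] at hx ⊢
    intro ℓ hℓ
    refine hx ℓ ?_
    intro y hy
    simp only [Set.mem_iInter, Set.mem_setOf_eq] at hy
    exact hy ℓ hℓ

open Classical in
instance : Fintype (Flat 𝒜) :=
  Fintype.ofInjective (fun X : Flat 𝒜 => {ℓ : Idx 𝒜 | X.1 ⊆ hypSet ℓ.1}) <| by
    intro X Y h
    dsimp only at h
    apply Subtype.ext
    rw [flat_eq_inter 𝒜 X, flat_eq_inter 𝒜 Y, h]

/-- The top flat: the whole ambient space. -/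
def topFlat : Flat 𝒜 :=
  ⟨Set.univ, ⟨⟨0, trivial⟩, fun _ => False, by simp⟩⟩

/-- The support of a face: the intersection of the hyperplanes on which it lies. -/
def supp (F : Face 𝒜) : Flat 𝒜 :=
  ⟨⋂ ℓ ∈ {ℓ : Idx 𝒜 | F.sgn ℓ = 0}, hypSet ℓ.1, by
    constructor
    · obtain ⟨x, hx⟩ := F.nonempty
      refine ⟨x, ?_⟩
      simp only [Set.mem_iInter, Set.mem_setOf_eq]
      intro ℓ hℓ
      have h0 := hx ℓ
      rw [hℓ] at h0
      simpa [hypSet, sign_eq_zero_iff] using h0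
    · exact ⟨fun ℓ => F.sgn ℓ = 0, rfl⟩⟩

/-- The dimension of (the affine hull of) a subset of `ℝ^n`. -/
def dimS (X : Set (V n)) : ℕ := Module.finrank ℝ (vectorSpan ℝ X)

open Classical in
/-- An element `w = Σ_F w^F H_F` of the Tits algebra (recorded by its coefficient
vector) is *characteristic of parameter `t`* if for every flat `X`, the sum of the
coefficients of the faces with support contained in `X` equals `t ^ rk X`,
where `rk X = dim X - d` and `d` is the common dimension of the minimal flats. -/
def IsCharacteristic (d : ℕ) (w : Face 𝒜 → ℝ) (t : ℝ) : Prop :=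
  ∀ X : Flat 𝒜,
    (∑ F : Face 𝒜, if (supp 𝒜 F).1 ⊆ X.1 then w F else 0) = t ^ (dimS X.1 - d)

/-- The sign vector of the Tits product `FG` of two faces. -/
def combineSgn {I : Type*} (σ τ : I → SignType) : I → SignType :=
  fun ℓ => if σ ℓ = 0 then τ ℓ else σ ℓ

open Classical in
/-- The product of the Tits algebra, on coefficient vectors:
`(u·v)^C = Σ_{F,G : FG = C} u^F v^G`, extending `H_F · H_G = H_{FG}` bilinearly. -/
def mulT (u v : Face 𝒜 → ℝ) : Face 𝒜 → ℝ :=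
  fun C => ∑ F : Face 𝒜, ∑ G : Face 𝒜,
    if combineSgn F.sgn G.sgn = C.sgn then u F * v G else 0

open Classical in
/-- The basis element `H_F` of the Tits algebra, as a coefficient vector. -/
def unitV (F : Face 𝒜) : Face 𝒜 → ℝ := fun G => if G = F then 1 else 0

/-- A chamber: a face whose sign vector is nowhere zero. -/
def IsChamber (F : Face 𝒜) : Prop := ∀ ℓ : Idx 𝒜, F.sgn ℓ ≠ 0

open Classical in
/-- `IsMoebius 𝒜 μ` states that `μ` is the Möbius function of the poset of
flats of `𝒜` (these conditions determine `μ` uniquely). -/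
def IsMoebius (μ : Flat 𝒜 → Flat 𝒜 → ℝ) : Prop :=
  (∀ X, μ X X = 1) ∧
  (∀ X Y : Flat 𝒜, X < Y →
    (∑ Z : Flat 𝒜, if X ≤ Z ∧ Z ≤ Y then μ X Z else 0) = 0) ∧
  (∀ X Y : Flat 𝒜, ¬ X ≤ Y → μ X Y = 0)

open Classical in
/-- `χ(𝒜^X, t) = Σ_{Y ≤ X} μ(Y, X) t^{rk Y}`: the characteristic polynomial of the
arrangement under the flat `X`.  Taking `X = ⊤` gives the characteristic
polynomial of `𝒜` itself. -/
def charPolyUnder (μ : Flat 𝒜 → Flat 𝒜 → ℝ) (d : ℕ) (X : Flat 𝒜) (t : ℝ) : ℝ :=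
  ∑ Y : Flat 𝒜, if Y ≤ X then μ Y X * t ^ (dimS Y.1 - d) else 0

/-- The space of directions `L = ⋂_{H ∈ 𝒜} dir(H)`: the intersection of the kernels of
the linear parts of the defining functionals. -/
def dirL : Submodule ℝ (V n) := ⨅ ℓ : Idx 𝒜, LinearMap.ker ℓ.1.linear

/-- A face is essentially bounded if its image in `ℝ^n / L` is bounded. -/
def EssBounded (F : Face 𝒜) : Prop :=
  Bornology.IsBounded ((dirL 𝒜).mkQ '' F.carrier)

/-- A hyperplane (zero set of a nonconstant affine functional) is nonempty. -/
lemma hyp_nonempty (ℓ : AffForm n) (h : ℓ.linear ≠ 0) : (hypSet ℓ).Nonempty := by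
  obtain ⟨v, hv⟩ : ∃ v, ℓ.linear v ≠ 0 := by
    by_contra hc
    push_neg at hc
    exact h (LinearMap.ext fun v => hc v)
  refine ⟨((-ℓ 0) / (ℓ.linear v)) • v, ?_⟩
  have hdecomp : ℓ (((-ℓ 0) / (ℓ.linear v)) • v)
      = ℓ.linear (((-ℓ 0) / (ℓ.linear v)) • v) + ℓ 0 := by
    conv_lhs => rw [show ((-ℓ 0) / (ℓ.linear v)) • v = ((-ℓ 0) / (ℓ.linear v)) • v +ᵥ (0 : V n)
      from (add_zero _).symm]
    rw [AffineMap.map_vadd]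
    rfl
  show ℓ _ = 0
  rw [hdecomp, LinearMap.map_smul, smul_eq_mul, div_mul_cancel₀ _ hv, neg_add_cancel]

/-- The set of nearest points of `P` to `x`. -/
def nearestPts {n : ℕ} (P : Set (V n)) (x : V n) : Set (V n) :=
  {y ∈ P | ∀ z ∈ P, dist x y ≤ dist x z}

/-- Faces of a polyhedron `P`: `P` itself, or a nonempty subset of the form
`{x ∈ P | ℓ x = sup_P ℓ}` for a linear functional `ℓ` bounded above on `P`. -/
def IsPolyFace {n : ℕ} (P Q : Set (V n)) : Prop :=
  Q = P ∨ (Q.Nonempty ∧ ∃ ℓ : V n →ₗ[ℝ] ℝ, BddAbove (ℓ '' P) ∧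
    Q = {x ∈ P | ℓ x = sSup (ℓ '' P)})

/-- `S_k(P)`: the set of points of `ℝ^n` whose nearest point in `P` lies in the
relative interior of some `k`-dimensional face of `P`. -/
def projSet {n : ℕ} (P : Set (V n)) (k : ℕ) : Set (V n) :=
  {x | ∃ y ∈ nearestPts P x, ∃ Q : Set (V n),
    IsPolyFace P Q ∧ dimS Q = k ∧ y ∈ intrinsicInterior ℝ Q}

/-- `HasIntrinsicVolumes P v` says that for each `k`, the proportion of the volume of
space occupied by `S_k(P)` exists and equals `v k`, i.e.
`v_k(P) = lim_{R→∞} vol(S_k(P) ∩ B(0,R)) / vol(B(0,R))`. -/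
def HasIntrinsicVolumes {n : ℕ} (P : Set (V n)) (v : ℕ → ℝ) : Prop :=
  ∀ k : ℕ, Filter.Tendsto
    (fun R : ℝ =>
      (volume (projSet P k ∩ Metric.ball (0 : V n) R)).toReal /
        (volume (Metric.ball (0 : V n) R)).toReal)
    Filter.atTop (nhds (v k))

/-! ### Nearest points -/

lemma nearest_iff {K : Set (V n)} (hK : Convex ℝ K) {x p : V n} (hp : p ∈ K) :
    p ∈ nearestPts K x ↔ ∀ z ∈ K, inner ℝ (x - p) (z - p) ≤ 0 := by
  constructor
  · rintro ⟨_, h⟩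
    rw [← norm_eq_iInf_iff_real_inner_le_zero hK hp]
    have : Nonempty K := ⟨⟨p, hp⟩⟩
    apply le_antisymm
    · apply le_ciInf
      intro w
      have := h w.1 w.2
      rwa [dist_eq_norm, dist_eq_norm] at this
    · exact ciInf_le (f := fun w : K => ‖x - w‖) ⟨0, by rintro _ ⟨w, rfl⟩; positivity⟩ ⟨p, hp⟩
  · intro h
    refine ⟨hp, fun z hz => ?_⟩
    have h1 := h z hz
    rw [dist_eq_norm, dist_eq_norm]
    have h2 : ‖x - z‖ ^ 2 = ‖x - p‖ ^ 2 - 2 * inner ℝ (x - p) (z - p) + ‖z - p‖ ^ 2 := by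
      rw [← norm_sub_sq_real]; congr 2; abel
    apply le_of_sq_le_sq _ (norm_nonneg _)
    nlinarith [sq_nonneg ‖z - p‖]

lemma nearest_lip {K : Set (V n)} (hK : Convex ℝ K) {x y p q : V n}
    (hp : p ∈ nearestPts K x) (hq : q ∈ nearestPts K y) : ‖p - q‖ ≤ ‖x - y‖ := by
  have h1 := (nearest_iff hK hp.1).1 hp q hq.1
  have h2 := (nearest_iff hK hq.1).1 hq p hp.1
  have h3 : inner ℝ (x - y) (p - q) ≥ ‖p - q‖ ^ 2 := by
    rw [← real_inner_self_eq_norm_sq]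
    have e : inner ℝ (x - y) (p - q) - inner ℝ (p - q) (p - q)
        = - (inner ℝ (x - p) (q - p)) - inner ℝ (y - q) (p - q) := by
      simp only [inner_sub_left, inner_sub_right]; ring
    linarith
  have h4 := real_inner_le_norm (x - y) (p - q)
  by_contra hc
  push Not at hc
  nlinarith [norm_nonneg (x - y), norm_nonneg (p - q)]

lemma nearest_unique {K : Set (V n)} (hK : Convex ℝ K) {x p q : V n}
    (hp : p ∈ nearestPts K x) (hq : q ∈ nearestPts K x) : p = q := by
  have := nearest_lip hK hp hq
  rw [sub_self, norm_zero] at this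
  exact sub_eq_zero.1 (norm_le_zero_iff.1 this)

lemma nearest_exists {K : Set (V n)} (hK : Convex ℝ K) (hc : IsClosed K) (hne : K.Nonempty)
    (x : V n) : ∃ p, p ∈ nearestPts K x := by
  obtain ⟨p, hp, h⟩ := exists_norm_eq_iInf_of_complete_convex hne hc.isComplete hK x
  exact ⟨p, (nearest_iff hK hp).2 ((norm_eq_iInf_iff_real_inner_le_zero hK hp).1 h)⟩

lemma nearest_subset {K K' : Set (V n)} (h : K' ⊆ K) {x p : V n}
    (hp : p ∈ nearestPts K x) (hp' : p ∈ K') : p ∈ nearestPts K' x :=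
  ⟨hp', fun z hz => hp.2 z (h hz)⟩

/-! ### Cutting by a hyperplane -/

lemma aff_cont (g : AffForm n) : Continuous g := g.continuous_of_finiteDimensional

lemma aff_line (g : AffForm n) (p z : V n) (t : ℝ) :
    g (p + t • (z - p)) = g p + t * (g z - g p) := by
  have := AffineMap.apply_lineMap g p z t
  rw [AffineMap.lineMap_apply, AffineMap.lineMap_apply] at this
  simp only [vsub_eq_sub, vadd_eq_add, smul_eq_mul] at this
  rw [add_comm, this, add_comm]

lemma aff_combo (g : AffForm n) (x y : V n) {a b : ℝ} (h : a + b = 1) :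
    g (a • x + b • y) = a * g x + b * g y := by
  have : a • x + b • y = x + b • (y - x) := by
    rw [← eq_sub_iff_add_eq] at h; subst h; module
  rw [this, aff_line, eq_sub_iff_add_eq.2 h]; ring

/-- abstract event: open cell `C` with closure `K`, nearest point to `x` of type `k`. -/
def Ev (x : V n) (k : ℕ) (C K : Set (V n)) (τ : V n → ℕ) : Prop :=
  C.Nonempty ∧ ∃ p ∈ nearestPts K x, τ p = k

lemma noncut_pos (x : V n) (k : ℕ) (C K : Set (V n)) (τ₀ τ₁ : V n → ℕ) (g : AffForm n)
    (hCK : K ⊆ closure C)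
    (h1 : ∀ p ∈ nearestPts K x, τ₁ p = τ₀ p) (hC : ∀ y ∈ C, 0 < g y) :
    Ev x k (C ∩ {y | 0 < g y}) (K ∩ {y | 0 ≤ g y}) τ₁ ↔ Ev x k C K τ₀ := by
  have e1 : C ∩ {y | 0 < g y} = C := Set.inter_eq_left.2 hC
  have e2 : K ∩ {y | 0 ≤ g y} = K := by
    apply Set.inter_eq_left.2
    refine hCK.trans (closure_minimal (fun y hy => (hC y hy).le) ?_)
    exact isClosed_le continuous_const (aff_cont g)
  rw [e1, e2]
  unfold Ev
  refine and_congr_right fun _ => exists_congr fun p => and_congr_right fun hp => ?_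
  rw [h1 p hp]

lemma cut_pos (x : V n) (k : ℕ) (C K : Set (V n)) (τ₀ τ₁ τ₂ : V n → ℕ) (g : AffForm n)
    (hK : Convex ℝ K) (hKc : IsClosed K) (hCK : C ⊆ K)
    (h1 : ∀ p ∈ nearestPts K x, τ₁ p = τ₀ p) (h2 : ∀ q, g q = 0 → τ₁ q = τ₂ q)
    (hC0 : (C ∩ {y | g y = 0}).Nonempty) (hCp : (C ∩ {y | 0 < g y}).Nonempty)
    (hCm : (C ∩ {y | g y < 0}).Nonempty)
    (p : V n) (hp : p ∈ nearestPts K x) (hgp : 0 ≤ g p) :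
    (Ev x k (C ∩ {y | 0 < g y}) (K ∩ {y | 0 ≤ g y}) τ₁ ↔ Ev x k C K τ₀) ∧
    (Ev x k (C ∩ {y | g y < 0}) (K ∩ {y | g y ≤ 0}) τ₁ ↔
      Ev x k (C ∩ {y | g y = 0}) (K ∩ {y | g y = 0}) τ₂) := by
  have cvp : Convex ℝ (K ∩ {y | 0 ≤ g y}) := by
    refine hK.inter fun a ha b hb s t hs ht hst => ?_
    simp only [Set.mem_ofPred_eq] at *
    rw [aff_combo g a b hst]; positivity
  have cvm : Convex ℝ (K ∩ {y | g y ≤ 0}) := by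
    refine hK.inter fun a ha b hb s t hs ht hst => ?_
    simp only [Set.mem_ofPred_eq] at *
    rw [aff_combo g a b hst]; nlinarith
  have cv0 : Convex ℝ (K ∩ {y | g y = 0}) := by
    refine hK.inter fun a ha b hb s t hs ht hst => ?_
    simp only [Set.mem_ofPred_eq] at *
    rw [aff_combo g a b hst, ha, hb]; simp
  have clm : IsClosed (K ∩ {y | g y ≤ 0}) :=
    hKc.inter (isClosed_le (aff_cont g) continuous_const)
  have hpp : p ∈ nearestPts (K ∩ {y | 0 ≤ g y}) x :=
    nearest_subset Set.inter_subset_left hp ⟨hp.1, hgp⟩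
  constructor
  · constructor
    · rintro ⟨_, q, hq, rfl⟩
      obtain rfl := nearest_unique cvp hq hpp
      exact ⟨hCp.mono Set.inter_subset_left, _, hp, (h1 _ hp).symm⟩
    · rintro ⟨_, q, hq, rfl⟩
      obtain rfl := nearest_unique hK hq hp
      exact ⟨hCp, _, hpp, h1 _ hp⟩
  · obtain ⟨q, hq⟩ := nearest_exists cvm clm
      (hCm.mono fun y hy => ⟨hCK hy.1, le_of_lt (show g y < 0 from hy.2)⟩) x
    have hgq : g q = 0 := by
      by_contra hne
      have hlt : g q < 0 := lt_of_le_of_ne hq.1.2 hne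
      -- move from q towards p
      set t : ℝ := (- g q) / (g p - g q) with ht
      have hd : 0 < g p - g q := by linarith
      have ht0 : 0 < t := div_pos (by linarith) hd
      have ht1 : t ≤ 1 := by rw [ht, div_le_one hd]; linarith
      have hr : g (q + t • (p - q)) = 0 := by
        rw [aff_line, ht]; field_simp; ring
      have hrK : q + t • (p - q) ∈ K := by
        have := hK hq.1.1 hp.1 (sub_nonneg.2 ht1) ht0.le (by ring)
        convert this using 1; module
      have i1 := (nearest_iff cvm hq.1).1 hq _ ⟨hrK, le_of_eq hr⟩
      have i2 := (nearest_iff hK hp.1).1 hp q hq.1.1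
      have i3 : inner ℝ (x - q) (p - q) ≤ 0 := by
        rw [add_sub_cancel_left, inner_smul_right] at i1
        by_contra hc
        push Not at hc
        nlinarith [mul_pos ht0 hc]
      have i4 : inner ℝ (p - q) (p - q)
          = inner ℝ (x - q) (p - q) + inner ℝ (x - p) (q - p) := by
        simp only [inner_sub_left, inner_sub_right]; ring
      have i5 : p - q = 0 := by
        apply inner_self_eq_zero (𝕜 := ℝ).1
        have := real_inner_self_nonneg (x := p - q)
        linarith
      have : p = q := sub_eq_zero.1 i5
      subst this; linarith
    have hq0 : q ∈ nearestPts (K ∩ {y | g y = 0}) x :=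
      nearest_subset (K := K ∩ {y | g y ≤ 0})
        (fun y hy => ⟨hy.1, le_of_eq (show g y = 0 from hy.2)⟩) hq ⟨hq.1.1, hgq⟩
    constructor
    · rintro ⟨_, r, hr, rfl⟩
      obtain rfl := nearest_unique cvm hr hq
      exact ⟨hC0, _, hq0, (h2 _ hgq).symm⟩
    · rintro ⟨_, r, hr, rfl⟩
      obtain rfl := nearest_unique cv0 hr hq0
      exact ⟨hCm, _, hq, h2 _ hgq⟩

open Classical in
lemma cut_all (x : V n) (k : ℕ) (C K : Set (V n)) (τ₀ τ₁ τ₂ : V n → ℕ) (g : AffForm n)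
    (hK : Convex ℝ K) (hKc : IsClosed K) (hCK : C ⊆ K) (hKC : C.Nonempty → K ⊆ closure C)
    (hCc : Convex ℝ C)
    (h1 : ∀ p ∈ nearestPts K x, τ₁ p = τ₀ p) (h2 : ∀ q, g q = 0 → τ₁ q = τ₂ q)
    (hcut : (C ∩ {y | g y = 0}).Nonempty →
      (C ∩ {y | 0 < g y}).Nonempty ∧ (C ∩ {y | g y < 0}).Nonempty) :
    (if Ev x k (C ∩ {y | g y < 0}) (K ∩ {y | g y ≤ 0}) τ₁ then (1 : ℝ) else 0)
      + (if Ev x k (C ∩ {y | 0 < g y}) (K ∩ {y | 0 ≤ g y}) τ₁ then (1 : ℝ) else 0)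
    = (if Ev x k C K τ₀ then (1 : ℝ) else 0)
      + (if Ev x k (C ∩ {y | g y = 0}) (K ∩ {y | g y = 0}) τ₂ then (1 : ℝ) else 0) := by
  have s1 : {y | 0 < (-g) y} = {y | g y < 0} := by ext; simp
  have s2 : {y | 0 ≤ (-g) y} = {y | g y ≤ 0} := by ext; simp
  have s3 : {y | (-g) y < 0} = {y | 0 < g y} := by ext; simp
  have s4 : {y | (-g) y ≤ 0} = {y | 0 ≤ g y} := by ext; simp
  have s5 : {y | (-g) y = 0} = {y | g y = 0} := by ext; simp
  by_cases hne : C.Nonempty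
  swap
  · rw [Set.not_nonempty_iff_eq_empty] at hne
    subst hne
    simp [Ev]
  by_cases h0 : (C ∩ {y | g y = 0}).Nonempty
  · obtain ⟨hCp, hCm⟩ := hcut h0
    obtain ⟨p, hp⟩ := nearest_exists hK hKc (hne.mono hCK) x
    rcases le_total 0 (g p) with hg | hg
    · obtain ⟨a, b⟩ := cut_pos x k C K τ₀ τ₁ τ₂ g hK hKc hCK h1 h2 h0 hCp hCm p hp hg
      rw [if_congr a rfl rfl, if_congr b rfl rfl, add_comm]
    · have := cut_pos x k C K τ₀ τ₁ τ₂ (-g) hK hKc hCK h1 (fun q hq => h2 q (by simpa using hq))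
        (by rwa [s5]) (by rwa [s1]) (by rwa [s3]) p hp (by simpa using hg)
      rw [s1, s2, s3, s4, s5] at this
      rw [if_congr this.1 rfl rfl, if_congr this.2 rfl rfl]
  · have e0 : ¬ Ev x k (C ∩ {y | g y = 0}) (K ∩ {y | g y = 0}) τ₂ := fun h => h0 h.1
    rw [if_neg e0]
    have hz : ∀ y ∈ C, g y ≠ 0 := fun y hy h => h0 ⟨y, hy, h⟩
    have hdich : (∀ y ∈ C, 0 < g y) ∨ (∀ y ∈ C, g y < 0) := by
      by_contra hcon
      push Not at hcon
      obtain ⟨⟨a, ha, ha'⟩, b, hb, hb'⟩ := hcon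
      have ha2 : g a < 0 := lt_of_le_of_ne ha' (hz a ha)
      have hb2 : 0 < g b := lt_of_le_of_ne hb' (hz b hb).symm
      have hd : 0 < g b - g a := by linarith
      apply hz ((g b / (g b - g a)) • a + (-g a / (g b - g a)) • b)
      · apply hCc ha hb
        · positivity
        · apply div_nonneg <;> linarith
        · field_simp; ring
      · rw [aff_combo g a b (by field_simp; ring)]
        field_simp; ring
    rcases hdich with h | h
    · rw [if_congr (noncut_pos x k C K τ₀ τ₁ g (hKC hne) h1 h) rfl rfl, if_neg, add_comm]
      rintro ⟨⟨y, hy, hy'⟩, _⟩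
      exact absurd (h y hy) (not_lt.2 (le_of_lt hy'))
    · have := noncut_pos x k C K τ₀ τ₁ (-g) (hKC hne) h1 (fun y hy => by simpa using h y hy)
      rw [s1, s2] at this
      rw [if_congr this rfl rfl,
        if_neg (c := Ev x k (C ∩ {y | 0 < g y}) (K ∩ {y | 0 ≤ g y}) τ₁)]
      rintro ⟨⟨y, hy, hy'⟩, _⟩
      exact absurd (h y hy) (not_lt.2 (le_of_lt hy'))

/-! ### Flats and chambers inside an affine subspace -/

/-- The intersection of `E` with the hyperplanes of `S`. -/
def fl (E : AffineSubspace ℝ (V n)) (S : Finset (AffForm n)) : AffineSubspace ℝ (V n) where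
  carrier := {y | y ∈ E ∧ ∀ ℓ ∈ S, ℓ y = 0}
  smul_vsub_vadd_mem' := by
    rintro c p₁ p₂ p₃ ⟨h1, h1'⟩ ⟨h2, h2'⟩ ⟨h3, h3'⟩
    refine ⟨E.smul_vsub_vadd_mem c h1 h2 h3, fun ℓ hℓ => ?_⟩
    rw [AffineMap.map_vadd, LinearMap.map_smul, AffineMap.linearMap_vsub, h1' ℓ hℓ, h2' ℓ hℓ,
      h3' ℓ hℓ]
    simp

lemma mem_fl {E : AffineSubspace ℝ (V n)} {S : Finset (AffForm n)} {y : V n} :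
    y ∈ fl E S ↔ y ∈ E ∧ ∀ ℓ ∈ S, ℓ y = 0 := Iff.rfl

/-- Open cell. -/
def Op (E : AffineSubspace ℝ (V n)) (A T : Finset (AffForm n)) : Set (V n) :=
  {y | y ∈ E ∧ ∀ ℓ ∈ A, (ℓ ∈ T → 0 < ℓ y) ∧ (ℓ ∉ T → ℓ y < 0)}

/-- Closed cell. -/
def Cl (E : AffineSubspace ℝ (V n)) (A T : Finset (AffForm n)) : Set (V n) :=
  {y | y ∈ E ∧ ∀ ℓ ∈ A, (ℓ ∈ T → 0 ≤ ℓ y) ∧ (ℓ ∉ T → ℓ y ≤ 0)}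

lemma mem_Op {E : AffineSubspace ℝ (V n)} {A T : Finset (AffForm n)} {y : V n} :
    y ∈ Op E A T ↔ y ∈ E ∧ ∀ ℓ ∈ A, (ℓ ∈ T → 0 < ℓ y) ∧ (ℓ ∉ T → ℓ y < 0) := Iff.rfl

lemma mem_Cl {E : AffineSubspace ℝ (V n)} {A T : Finset (AffForm n)} {y : V n} :
    y ∈ Cl E A T ↔ y ∈ E ∧ ∀ ℓ ∈ A, (ℓ ∈ T → 0 ≤ ℓ y) ∧ (ℓ ∉ T → ℓ y ≤ 0) := Iff.rfl

open Classical in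
/-- Hyperplanes of `A` through `p`. -/
def zs (A : Finset (AffForm n)) (p : V n) : Finset (AffForm n) := A.filter (fun ℓ => ℓ p = 0)

lemma mem_zs {A : Finset (AffForm n)} {p : V n} {ℓ : AffForm n} :
    ℓ ∈ zs A p ↔ ℓ ∈ A ∧ ℓ p = 0 := by simp [zs]

/-- Dimension of an affine subspace. -/
def dm (E : AffineSubspace ℝ (V n)) : ℕ := Module.finrank ℝ E.direction

/-- Dimension of the smallest flat containing `p`. -/
def typ (E : AffineSubspace ℝ (V n)) (A : Finset (AffForm n)) (p : V n) : ℕ :=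
  dm (fl E (zs A p))

lemma Op_sub_Cl (E : AffineSubspace ℝ (V n)) (A T : Finset (AffForm n)) : Op E A T ⊆ Cl E A T :=
  fun _ hy => ⟨hy.1, fun ℓ hℓ => ⟨fun h => ((hy.2 ℓ hℓ).1 h).le, fun h => ((hy.2 ℓ hℓ).2 h).le⟩⟩

lemma sub_convex (E : AffineSubspace ℝ (V n)) : Convex ℝ (E : Set (V n)) := E.convex

lemma combo_mem {E : AffineSubspace ℝ (V n)} {x y : V n} (hx : x ∈ E) (hy : y ∈ E) {a b : ℝ}
    (h : a + b = 1) : a • x + b • y ∈ E := by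
  have := AffineMap.lineMap_mem b hx hy
  rw [AffineMap.lineMap_apply] at this
  convert this using 1
  rw [← eq_sub_iff_add_eq] at h; subst h
  simp only [vsub_eq_sub, vadd_eq_add]; module

lemma Cl_convex (E : AffineSubspace ℝ (V n)) (A T : Finset (AffForm n)) :
    Convex ℝ (Cl E A T) := by
  intro x hx y hy a b ha hb hab
  refine ⟨combo_mem hx.1 hy.1 hab, fun ℓ hℓ => ⟨fun h => ?_, fun h => ?_⟩⟩
  · have h1 := (hx.2 ℓ hℓ).1 h
    have h2 := (hy.2 ℓ hℓ).1 h
    rw [aff_combo ℓ x y hab]; positivity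
  · have h1 := (hx.2 ℓ hℓ).2 h
    have h2 := (hy.2 ℓ hℓ).2 h
    rw [aff_combo ℓ x y hab]; nlinarith

lemma Op_Cl_seg {E : AffineSubspace ℝ (V n)} {A T : Finset (AffForm n)} {x y : V n}
    (hx : x ∈ Op E A T) (hy : y ∈ Cl E A T) {a b : ℝ} (ha : 0 < a) (hb : 0 ≤ b) (hab : a + b = 1) :
    a • x + b • y ∈ Op E A T := by
  refine ⟨combo_mem hx.1 hy.1 hab, fun ℓ hℓ => ⟨fun h => ?_, fun h => ?_⟩⟩
  · have h1 := (hx.2 ℓ hℓ).1 h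
    have h2 := (hy.2 ℓ hℓ).1 h
    rw [aff_combo ℓ x y hab]; positivity
  · have h1 := (hx.2 ℓ hℓ).2 h
    have h2 := (hy.2 ℓ hℓ).2 h
    rw [aff_combo ℓ x y hab]; nlinarith [mul_pos ha (neg_pos.2 h1)]

lemma Op_convex (E : AffineSubspace ℝ (V n)) (A T : Finset (AffForm n)) :
    Convex ℝ (Op E A T) := by
  intro x hx y hy a b ha hb hab
  rcases ha.eq_or_lt with rfl | ha
  · rw [zero_add] at hab; subst hab; simpa using hy
  · exact Op_Cl_seg hx (Op_sub_Cl _ _ _ hy) ha hb hab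

lemma Cl_closed (E : AffineSubspace ℝ (V n)) (A T : Finset (AffForm n)) :
    IsClosed (Cl E A T) := by
  have : Cl E A T = (E : Set (V n)) ∩ ⋂ ℓ ∈ A, ({y | ℓ ∈ T → 0 ≤ ℓ y} ∩ {y | ℓ ∉ T → ℓ y ≤ 0}) := by
    ext y; simp [mem_Cl]
  rw [this]
  refine E.closed_of_finiteDimensional.inter (isClosed_biInter fun ℓ _ => IsClosed.inter ?_ ?_)
  · exact isClosed_imp isOpen_const (isClosed_le continuous_const (aff_cont ℓ))
  · exact isClosed_imp isOpen_const (isClosed_le (aff_cont ℓ) continuous_const)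

lemma Cl_sub_closure (E : AffineSubspace ℝ (V n)) (A T : Finset (AffForm n))
    (hne : (Op E A T).Nonempty) : Cl E A T ⊆ closure (Op E A T) := by
  obtain ⟨c, hc⟩ := hne
  intro y hy
  have h : Filter.Tendsto (fun t : ℝ => t • c + (1 - t) • y) (nhdsWithin 0 (Set.Ioi 0)) (nhds y) := by
    have : Continuous (fun t : ℝ => t • c + (1 - t) • y) := by fun_prop
    have h2 := this.tendsto 0
    simp only [zero_smul, sub_zero, one_smul, zero_add] at h2
    exact h2.mono_left nhdsWithin_le_nhds
  refine mem_closure_of_tendsto h ?_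
  filter_upwards [Ioo_mem_nhdsGT (zero_lt_one (α := ℝ))] with t ht
  exact Op_Cl_seg hc hy ht.1 (by linarith [ht.2]) (by ring)

lemma near_Cl {E : AffineSubspace ℝ (V n)} {A T : Finset (AffForm n)} {p : V n}
    (hp : p ∈ Cl E A T) : ∀ᶠ y in nhds p, y ∈ fl E (zs A p) → y ∈ Cl E A T := by
  have h : ∀ ℓ ∈ A, ∀ᶠ y in nhds p, (0 < ℓ p → 0 < ℓ y) ∧ (ℓ p < 0 → ℓ y < 0) := by
    intro ℓ _
    apply Filter.Eventually.and
    · by_cases h : 0 < ℓ p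
      · filter_upwards [(aff_cont ℓ).continuousAt.eventually (lt_mem_nhds h)] with y hy _ using hy
      · simp [h]
    · by_cases h : ℓ p < 0
      · filter_upwards [(aff_cont ℓ).continuousAt.eventually (gt_mem_nhds h)] with y hy _ using hy
      · simp [h]
  rw [← Filter.eventually_all_finset] at h
  filter_upwards [h] with y hy hyf
  refine ⟨hyf.1, fun ℓ hℓ => ?_⟩
  have hh := hy ℓ hℓ
  rcases lt_trichotomy (ℓ p) 0 with h0 | h0 | h0
  · exact ⟨fun hT => absurd ((hp.2 ℓ hℓ).1 hT) (not_le.2 h0), fun _ => (hh.2 h0).le⟩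
  · have := hyf.2 ℓ (mem_zs.2 ⟨hℓ, h0⟩)
    simp [this]
  · exact ⟨fun _ => (hh.1 h0).le, fun hT => absurd ((hp.2 ℓ hℓ).2 hT) (not_le.2 h0)⟩

lemma fl_line {E : AffineSubspace ℝ (V n)} {p z : V n} (hp : p ∈ E) (hz : z ∈ E) (t : ℝ) :
    p + t • (z - p) ∈ E := by
  have := combo_mem hp hz (show (1 - t) + t = 1 by ring)
  convert this using 1; module

lemma self_mem_fl {E : AffineSubspace ℝ (V n)} {A : Finset (AffForm n)} {p : V n}
    (hp : p ∈ E) : p ∈ fl E (zs A p) := ⟨hp, fun _ h => (mem_zs.1 h).2⟩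

/-- along a line through `p` inside the flat, both small directions stay in the closed cell -/
lemma near_line {E : AffineSubspace ℝ (V n)} {A T : Finset (AffForm n)} {p z : V n}
    (hp : p ∈ Cl E A T) (hz : z ∈ fl E (zs A p)) :
    ∃ t : ℝ, 0 < t ∧ p + t • (z - p) ∈ Cl E A T ∧ p + (-t) • (z - p) ∈ Cl E A T := by
  have hc : Continuous (fun t : ℝ => p + t • (z - p)) := by fun_prop
  have hc' : Continuous (fun t : ℝ => p + (-t) • (z - p)) := by fun_prop
  have h1 := hc.tendsto 0
  have h2 := hc'.tendsto 0
  simp only [neg_zero, zero_smul, add_zero] at h1 h2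
  have e1 := (h1.eventually (near_Cl hp)).filter_mono (nhdsWithin_le_nhds (s := Set.Ioi 0))
  have e2 := (h2.eventually (near_Cl hp)).filter_mono (nhdsWithin_le_nhds (s := Set.Ioi 0))
  obtain ⟨t, ⟨ha, hb⟩, ht⟩ := ((e1.and e2).and self_mem_nhdsWithin).exists
  exact ⟨t, ht, ha (fl_line (self_mem_fl hp.1) hz _), hb (fl_line (self_mem_fl hp.1) hz _)⟩

lemma nearest_proj {E : AffineSubspace ℝ (V n)} {A T : Finset (AffForm n)} {x p z : V n}
    (hp : p ∈ nearestPts (Cl E A T) x) (hz : z ∈ fl E (zs A p)) :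
    inner ℝ (x - p) (z - p) = 0 := by
  obtain ⟨t, ht, h1, h2⟩ := near_line hp.1 hz
  have i1 := (nearest_iff (Cl_convex E A T) hp.1).1 hp _ h1
  have i2 := (nearest_iff (Cl_convex E A T) hp.1).1 hp _ h2
  rw [add_sub_cancel_left, inner_smul_right] at i1 i2
  apply le_antisymm <;> nlinarith

/-- Generic position of `x`. -/
def Gen (x : V n) (E : AffineSubspace ℝ (V n)) (A : Finset (AffForm n)) : Prop :=
  ∀ S ⊆ A, ∀ ℓ ∈ A, ∀ p ∈ fl E S, (∀ z ∈ fl E S, inner ℝ (x - p) (z - p) = 0) →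
    ℓ p = 0 → ∀ z ∈ fl E S, ℓ z = 0

open Classical in
lemma fl_insert (E : AffineSubspace ℝ (V n)) (S : Finset (AffForm n)) (ℓ : AffForm n) :
    fl E (insert ℓ S) = fl (fl E {ℓ}) S := by
  ext y; simp [mem_fl, and_assoc]

open Classical in
lemma Gen.left {x : V n} {E : AffineSubspace ℝ (V n)} {A : Finset (AffForm n)} {ℓ : AffForm n}
    (h : Gen x E (insert ℓ A)) : Gen x E A := fun S hS ℓ' hℓ' =>
  h S (hS.trans (subset_insert _ _)) ℓ' (mem_insert_of_mem hℓ')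

open Classical in
lemma Gen.right {x : V n} {E : AffineSubspace ℝ (V n)} {A : Finset (AffForm n)} {ℓ : AffForm n}
    (h : Gen x E (insert ℓ A)) : Gen x (fl E {ℓ}) A := fun S hS ℓ' hℓ' => by
  rw [← fl_insert]
  exact h (insert ℓ S) (insert_subset_insert _ hS) ℓ' (mem_insert_of_mem hℓ')

open Classical in
lemma typ_eq {x : V n} {E : AffineSubspace ℝ (V n)} {A T : Finset (AffForm n)} {ℓ : AffForm n}
    (h : Gen x E (insert ℓ A)) {p : V n} (hp : p ∈ nearestPts (Cl E A T) x) :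
    typ E (insert ℓ A) p = typ E A p := by
  unfold typ
  congr 1
  by_cases h0 : ℓ p = 0
  · have := h (zs A p) (fun a ha => mem_insert_of_mem (mem_zs.1 ha).1) ℓ (mem_insert_self _ _) p
      (self_mem_fl hp.1.1) (fun z hz => nearest_proj hp hz) h0
    ext y
    constructor
    · rintro ⟨h1, h2⟩
      exact ⟨h1, fun a ha => h2 a (mem_zs.2 ⟨mem_insert_of_mem (mem_zs.1 ha).1, (mem_zs.1 ha).2⟩)⟩
    · intro hy
      refine ⟨hy.1, fun a ha => ?_⟩
      obtain ⟨ha1, ha2⟩ := mem_zs.1 ha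
      rcases mem_insert.1 ha1 with rfl | ha1
      · exact this y hy
      · exact hy.2 a (mem_zs.2 ⟨ha1, ha2⟩)
  · congr 1
    simp [zs, Finset.filter_insert, h0]

open Classical in
lemma typ_eq' {E : AffineSubspace ℝ (V n)} {A : Finset (AffForm n)} {ℓ : AffForm n}
    {q : V n} (hq : ℓ q = 0) :
    typ E (insert ℓ A) q = typ (fl E {ℓ}) A q := by
  unfold typ
  rw [← fl_insert]
  simp [zs, Finset.filter_insert, hq]

/-- signed Whitney sum -/
def Wh (E : AffineSubspace ℝ (V n)) (A : Finset (AffForm n)) (k : ℕ) : ℝ := by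
  classical
  exact ∑ S ∈ A.powerset,
    if (fl E S : Set (V n)).Nonempty ∧ dm (fl E S) = k then (-1) ^ S.card else 0

/-- number of cells whose nearest point to `x` has type `k` -/
def Nk (x : V n) (E : AffineSubspace ℝ (V n)) (A : Finset (AffForm n)) (k : ℕ) : ℝ := by
  classical
  exact ∑ T ∈ A.powerset, if Ev x k (Op E A T) (Cl E A T) (typ E A) then 1 else 0

open Classical in
lemma Wh_insert (E : AffineSubspace ℝ (V n)) (A : Finset (AffForm n)) (k : ℕ) (ℓ : AffForm n)
    (hℓ : ℓ ∉ A) : Wh E (insert ℓ A) k = Wh E A k - Wh (fl E {ℓ}) A k := by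
  unfold Wh
  rw [sum_powerset_insert hℓ, sub_eq_add_neg, ← sum_neg_distrib]
  congr 1
  refine sum_congr rfl fun S hS => ?_
  rw [fl_insert, card_insert_of_notMem (fun h => hℓ (mem_powerset.1 hS h))]
  split_ifs <;> simp [pow_succ]

open Classical in
lemma Nk_insert (x : V n) (E : AffineSubspace ℝ (V n)) (A : Finset (AffForm n)) (k : ℕ)
    (ℓ : AffForm n) (hℓ : ℓ ∉ A) (hg : Gen x E (insert ℓ A)) (hne : ∃ z ∈ E, ℓ z ≠ 0) :
    Nk x E (insert ℓ A) k = Nk x E A k + Nk x (fl E {ℓ}) A k := by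
  unfold Nk
  rw [sum_powerset_insert hℓ, ← sum_add_distrib, ← sum_add_distrib]
  refine sum_congr rfl fun T hT => ?_
  have hT' : ℓ ∉ T := fun h => hℓ (mem_powerset.1 hT h)
  have a1 : Op E (insert ℓ A) T = Op E A T ∩ {y | ℓ y < 0} := by
    ext y; simp [mem_Op, hT']; tauto
  have a2 : Cl E (insert ℓ A) T = Cl E A T ∩ {y | ℓ y ≤ 0} := by
    ext y; simp [mem_Cl, hT']; tauto
  have aux : ∀ a ∈ A, (a ∈ insert ℓ T ↔ a ∈ T) := by
    intro a ha
    rw [mem_insert]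
    constructor
    · rintro (rfl | h)
      · exact absurd ha hℓ
      · exact h
    · exact Or.inr
  have b1 : Op E (insert ℓ A) (insert ℓ T) = Op E A T ∩ {y | 0 < ℓ y} := by
    ext y
    simp only [mem_Op, Set.mem_inter_iff, Set.mem_ofPred_eq, forall_mem_insert, mem_insert_self,
      not_true_eq_false, true_imp_iff, false_imp_iff, and_true, and_assoc]
    refine and_congr_right fun _ => ?_
    rw [and_comm]
    refine and_congr_left fun _ => forall₂_congr fun a ha => ?_
    rw [aux a ha]
  have b2 : Cl E (insert ℓ A) (insert ℓ T) = Cl E A T ∩ {y | 0 ≤ ℓ y} := by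
    ext y
    simp only [mem_Cl, Set.mem_inter_iff, Set.mem_ofPred_eq, forall_mem_insert, mem_insert_self,
      not_true_eq_false, true_imp_iff, false_imp_iff, and_true, and_assoc]
    refine and_congr_right fun _ => ?_
    rw [and_comm]
    refine and_congr_left fun _ => forall₂_congr fun a ha => ?_
    rw [aux a ha]
  have c1 : Op (fl E {ℓ}) A T = Op E A T ∩ {y | ℓ y = 0} := by
    ext y; simp [mem_Op, mem_fl]; tauto
  have c2 : Cl (fl E {ℓ}) A T = Cl E A T ∩ {y | ℓ y = 0} := by
    ext y; simp [mem_Cl, mem_fl]; tauto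
  rw [a1, a2, b1, b2, c1, c2]
  refine cut_all x k _ _ _ _ _ ℓ (Cl_convex E A T) (Cl_closed E A T) (Op_sub_Cl E A T)
    (Cl_sub_closure E A T) (Op_convex E A T) (fun p hp => typ_eq hg hp) (fun q hq => typ_eq' hq) ?_
  rintro ⟨c, hc, hc0⟩
  replace hc0 : ℓ c = 0 := hc0
  obtain ⟨z, hz, hz0⟩ := hne
  -- the open cell contains a small segment around `c`
  have hop : ∀ᶠ y in nhds c, y ∈ E → y ∈ Op E A T := by
    have h : ∀ a ∈ A, ∀ᶠ y in nhds c, (a ∈ T → 0 < a y) ∧ (a ∉ T → a y < 0) := by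
      intro a ha
      by_cases haT : a ∈ T
      · have := (hc.2 a ha).1 haT
        filter_upwards [(aff_cont a).continuousAt.eventually (lt_mem_nhds this)] with y hy
        exact ⟨fun _ => hy, fun h => absurd haT h⟩
      · have := (hc.2 a ha).2 haT
        filter_upwards [(aff_cont a).continuousAt.eventually (gt_mem_nhds this)] with y hy
        exact ⟨fun h => absurd h haT, fun _ => hy⟩
    rw [← Filter.eventually_all_finset] at h
    filter_upwards [h] with y hy hyE using ⟨hyE, hy⟩
  have k1 : Continuous (fun t : ℝ => c + t • (z - c)) := by fun_prop
  have k2 : Continuous (fun t : ℝ => c + (-t) • (z - c)) := by fun_prop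
  have h1 := k1.tendsto 0
  have h2 := k2.tendsto 0
  simp only [neg_zero, zero_smul, add_zero] at h1 h2
  have e1 := (h1.eventually hop).filter_mono (nhdsWithin_le_nhds (s := Set.Ioi 0))
  have e2 := (h2.eventually hop).filter_mono (nhdsWithin_le_nhds (s := Set.Ioi 0))
  obtain ⟨t, ⟨ha, hb⟩, ht⟩ := ((e1.and e2).and self_mem_nhdsWithin).exists
  replace ht : 0 < t := ht
  have ha' := ha (fl_line hc.1 hz _)
  have hb' := hb (fl_line hc.1 hz _)
  have g1 := aff_line ℓ c z t
  have g2 := aff_line ℓ c z (-t)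
  rw [hc0] at g1 g2
  rcases lt_or_gt_of_ne hz0 with hz1 | hz1
  · refine ⟨⟨_, hb', ?_⟩, ⟨_, ha', ?_⟩⟩
    · rw [Set.mem_ofPred_eq, g2]; nlinarith
    · rw [Set.mem_ofPred_eq, g1]; nlinarith
  · refine ⟨⟨_, ha', ?_⟩, ⟨_, hb', ?_⟩⟩
    · rw [Set.mem_ofPred_eq, g1]; nlinarith
    · rw [Set.mem_ofPred_eq, g2]; nlinarith

lemma fl_direction (E : AffineSubspace ℝ (V n)) (ℓ : AffForm n)
    (hne : (fl E {ℓ} : Set (V n)).Nonempty) :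
    (fl E {ℓ}).direction = E.direction ⊓ LinearMap.ker ℓ.linear := by
  obtain ⟨p, hp⟩ := hne
  have hp' : p ∈ E ∧ ∀ a ∈ ({ℓ} : Finset (AffForm n)), a p = 0 := hp
  have hp0 : ℓ p = 0 := hp'.2 ℓ (by simp)
  ext v
  rw [Submodule.mem_inf, LinearMap.mem_ker, ← AffineSubspace.vadd_mem_iff_mem_direction v hp,
    ← AffineSubspace.vadd_mem_iff_mem_direction v hp'.1, mem_fl]
  have : ℓ (v +ᵥ p) = ℓ.linear v := by rw [AffineMap.map_vadd, hp0]; simp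
  simp only [mem_singleton, forall_eq, this]

lemma dm_fl (E : AffineSubspace ℝ (V n)) (ℓ : AffForm n)
    (hne : (fl E {ℓ} : Set (V n)).Nonempty) (hz : ∃ z ∈ E, ℓ z ≠ 0) :
    dm (fl E {ℓ}) + 1 = dm E := by
  unfold dm
  rw [fl_direction E ℓ hne]
  obtain ⟨p, hp⟩ := hne
  have hp' : p ∈ E ∧ ∀ a ∈ ({ℓ} : Finset (AffForm n)), a p = 0 := hp
  have hp0 : ℓ p = 0 := hp'.2 ℓ (by simp)
  obtain ⟨z, hz, hz0⟩ := hz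
  set D := E.direction
  set φ : D →ₗ[ℝ] ℝ := ℓ.linear.domRestrict D
  have hsurj : Function.Surjective φ := by
    apply LinearMap.surjective
    intro h
    have hv : z - p ∈ D := AffineSubspace.vsub_mem_direction hz hp'.1
    have := LinearMap.congr_fun h ⟨z - p, hv⟩
    have h2 : φ ⟨z - p, hv⟩ = ℓ z - ℓ p := AffineMap.linearMap_vsub ℓ z p
    rw [h2, hp0, sub_zero] at this
    exact hz0 this
  have h1 := LinearMap.finrank_range_add_finrank_ker φ
  rw [LinearMap.range_eq_top.2 hsurj, finrank_top, Module.finrank_self] at h1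
  have h2 : D ⊓ LinearMap.ker ℓ.linear = Submodule.map D.subtype (LinearMap.ker φ) := by
    ext v
    simp [φ, LinearMap.mem_ker, and_comm]
  rw [h2, Submodule.finrank_map_subtype_eq, ← h1, add_comm]

lemma Wh_empty (E : AffineSubspace ℝ (V n)) (A : Finset (AffForm n)) (k : ℕ)
    (h : ¬ (E : Set (V n)).Nonempty) : Wh E A k = 0 := by
  unfold Wh
  refine sum_eq_zero fun S _ => if_neg ?_
  rintro ⟨⟨y, hy⟩, _⟩
  exact h ⟨y, hy.1⟩

lemma Nk_empty (x : V n) (E : AffineSubspace ℝ (V n)) (A : Finset (AffForm n)) (k : ℕ)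
    (h : ¬ (E : Set (V n)).Nonempty) : Nk x E A k = 0 := by
  unfold Nk
  refine sum_eq_zero fun S _ => if_neg ?_
  rintro ⟨⟨y, hy⟩, _⟩
  exact h ⟨y, hy.1⟩

lemma main_count (x : V n) (A : Finset (AffForm n)) (k : ℕ) : ∀ (E : AffineSubspace ℝ (V n)),
    Gen x E A → Wh E A k = (-1) ^ (dm E + k) * Nk x E A k := by
  classical
  induction A using Finset.induction_on with
  | empty =>
    intro E _
    have hf : ∀ S : Finset (AffForm n), S = ∅ → fl E S = E := by
      rintro S rfl; ext y; simp [mem_fl]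
    have h1 : Op E ∅ ∅ = (E : Set (V n)) := by ext y; simp [mem_Op]
    have h2 : Cl E ∅ ∅ = (E : Set (V n)) := by ext y; simp [mem_Cl]
    have h3 : ∀ p, typ E ∅ p = dm E := fun p => by
      unfold typ; rw [hf]; simp [zs]
    by_cases hE : (E : Set (V n)).Nonempty
    · obtain ⟨p, hp⟩ := nearest_exists E.convex E.closed_of_finiteDimensional hE x
      have key : Ev x k (Op E ∅ ∅) (Cl E ∅ ∅) (typ E ∅) ↔ dm E = k := by
        rw [h1, h2]
        exact ⟨fun ⟨_, q, _, h⟩ => by rw [← h, h3], fun h => ⟨hE, p, hp, by rw [h3, h]⟩⟩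
      unfold Wh Nk
      rw [powerset_empty, sum_singleton, sum_singleton, hf _ rfl]
      by_cases hk : dm E = k
      · rw [if_pos ⟨hE, hk⟩, if_pos (key.2 hk), hk, ← two_mul, pow_mul]; simp
      · rw [if_neg (fun h => hk h.2), if_neg (fun h => hk (key.1 h))]; simp
    · rw [Wh_empty _ _ _ hE, Nk_empty _ _ _ _ hE, mul_zero]
  | insert ℓ A hℓ ih =>
    intro E hg
    rw [Wh_insert E A k ℓ hℓ]
    by_cases hz : ∃ z ∈ E, ℓ z ≠ 0
    · rw [Nk_insert x E A k ℓ hℓ hg hz, ih E hg.left, ih _ hg.right]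
      by_cases hne : (fl E {ℓ} : Set (V n)).Nonempty
      · rw [← dm_fl E ℓ hne hz]; ring
      · rw [Nk_empty _ _ _ _ hne]; ring
    · push Not at hz
      have he : fl E {ℓ} = E := by
        ext y; simp only [mem_fl, mem_singleton, forall_eq]
        exact ⟨fun h => h.1, fun h => ⟨h, hz y h⟩⟩
      rw [he, sub_self]
      have : Nk x E (insert ℓ A) k = 0 := by
        unfold Nk
        refine sum_eq_zero fun T _ => if_neg ?_
        rintro ⟨⟨y, hy⟩, _⟩
        have h0 := hz y hy.1
        have h1 := hy.2 ℓ (mem_insert_self _ _)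
        by_cases h : ℓ ∈ T
        · have := h1.1 h; linarith
        · have := h1.2 h; linarith
      rw [this, mul_zero]

/-! ### Faces of the closed cells -/

lemma face_dim {A T : Finset (AffForm n)} {p : V n} {Q : Set (V n)} (hp : p ∈ Cl ⊤ A T)
    (hQ : IsPolyFace (Cl ⊤ A T) Q) (hpQ : p ∈ intrinsicInterior ℝ Q) :
    vectorSpan ℝ Q = (fl ⊤ (zs A p)).direction := by
  have hQK : Q ⊆ Cl ⊤ A T := by
    rcases hQ with rfl | ⟨_, φ, _, rfl⟩
    · exact subset_rfl
    · exact fun y hy => hy.1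
  have hpQ' : p ∈ Q := intrinsicInterior_subset hpQ
  apply le_antisymm
  · apply vectorSpan_mono
    intro z hz
    refine ⟨trivial, fun ℓ hℓ => ?_⟩
    obtain ⟨hℓA, hℓp⟩ := mem_zs.1 hℓ
    obtain ⟨y, hy, hyp⟩ := mem_intrinsicInterior.1 hpQ
    have hmem : ∀ t : ℝ, p + (-t) • (z - p) ∈ affineSpan ℝ Q := fun t =>
      fl_line (subset_affineSpan ℝ Q hpQ') (subset_affineSpan ℝ Q hz) _
    have hc : Continuous (fun t : ℝ => (⟨p + (-t) • (z - p), hmem t⟩ : affineSpan ℝ Q)) := by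
      apply Continuous.subtype_mk; fun_prop
    have h0 : (⟨p + (-(0:ℝ)) • (z - p), hmem 0⟩ : affineSpan ℝ Q) = y := by
      apply Subtype.ext; simp [hyp]
    have hev := hc.tendsto 0
    rw [h0] at hev
    have h1 := (hev.eventually (mem_interior_iff_mem_nhds.1 hy)).filter_mono
      (nhdsWithin_le_nhds (s := Set.Ioi 0))
    obtain ⟨t, ha, ht⟩ := (h1.and self_mem_nhdsWithin).exists
    replace ht : 0 < t := ht
    have ha' : p + (-t) • (z - p) ∈ Cl ⊤ A T := hQK ha
    have g := aff_line ℓ p z (-t)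
    rw [hℓp] at g
    have r1 := (hQK hz).2 ℓ hℓA
    have r2 := ha'.2 ℓ hℓA
    rw [g] at r2
    by_cases hT : ℓ ∈ T
    · have := r1.1 hT; have := r2.1 hT; apply le_antisymm <;> nlinarith
    · have := r1.2 hT; have := r2.2 hT; apply le_antisymm <;> nlinarith
  · intro v hv
    have hz : v +ᵥ p ∈ fl ⊤ (zs A p) :=
      AffineSubspace.vadd_mem_of_mem_direction hv (self_mem_fl (AffineSubspace.mem_top _ _ _))
    obtain ⟨t, ht, h1, h2⟩ := near_line hp hz
    have e : (v +ᵥ p) - p = v := by simp [vadd_eq_add]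
    rw [e] at h1 h2
    have hin : p + t • v ∈ Q := by
      rcases hQ with rfl | ⟨_, φ, hb, rfl⟩
      · exact h1
      · have s0 : φ p = _ := hpQ'.2
        have s1 := le_csSup hb (Set.mem_image_of_mem φ h1)
        have s2 := le_csSup hb (Set.mem_image_of_mem φ h2)
        rw [← s0] at s1 s2
        refine ⟨h1, ?_⟩
        rw [← s0]
        simp only [map_add, map_smul, smul_eq_mul] at s1 s2 ⊢
        have : t * φ v = 0 := by linarith
        linarith
    have := vsub_mem_vectorSpan ℝ hin hpQ'
    have h3 := Submodule.smul_mem _ t⁻¹ this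
    convert h3 using 1
    rw [vsub_eq_sub, add_sub_cancel_left, smul_smul, inv_mul_cancel₀ ht.ne', one_smul]

lemma face_exists {A T : Finset (AffForm n)} {p : V n} (hp : p ∈ Cl ⊤ A T) :
    ∃ Q, IsPolyFace (Cl ⊤ A T) Q ∧ p ∈ intrinsicInterior ℝ Q := by
  classical
  set K := Cl ⊤ A T with hK
  set F := fl ⊤ (zs A p) with hF
  set φ : V n →ₗ[ℝ] ℝ := ∑ ℓ ∈ zs A p, (if ℓ ∈ T then (-1 : ℝ) else 1) • ℓ.linear with hφ
  have hval : ∀ z, φ z - φ p = ∑ ℓ ∈ zs A p, (if ℓ ∈ T then (-1 : ℝ) else 1) * ℓ z := by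
    intro z
    rw [← map_sub, hφ, LinearMap.sum_apply]
    refine sum_congr rfl fun ℓ hℓ => ?_
    have : ℓ.linear (z - p) = ℓ z - ℓ p := AffineMap.linearMap_vsub ℓ z p
    rw [LinearMap.smul_apply, this, (mem_zs.1 hℓ).2, sub_zero, smul_eq_mul]
  have hterm : ∀ z ∈ K, ∀ ℓ ∈ zs A p, (if ℓ ∈ T then (-1 : ℝ) else 1) * ℓ z ≤ 0 := by
    intro z hz ℓ hℓ
    have := hz.2 ℓ (mem_zs.1 hℓ).1
    split_ifs with h
    · have := this.1 h; linarith
    · have := this.2 h; linarith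
  have hle : ∀ z ∈ K, φ z ≤ φ p := by
    intro z hz
    have := sum_nonpos (hterm z hz)
    rw [← hval] at this; linarith
  have hgr : IsGreatest (φ '' K) (φ p) := by
    refine ⟨⟨p, hp, rfl⟩, ?_⟩
    rintro _ ⟨z, hz, rfl⟩
    exact hle z hz
  have hiff : ∀ z ∈ K, (φ z = sSup (φ '' K) ↔ z ∈ F) := by
    intro z hz
    rw [hgr.csSup_eq, ← sub_eq_zero, hval, sum_eq_zero_iff_of_nonpos (hterm z hz), hF, mem_fl]
    constructor
    · intro h
      refine ⟨trivial, fun ℓ hℓ => ?_⟩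
      have := h ℓ hℓ
      split_ifs at this <;> linarith
    · intro h ℓ hℓ
      rw [h.2 ℓ hℓ, mul_zero]
  set Q := {x ∈ K | φ x = sSup (φ '' K)} with hQ
  have hpF : p ∈ F := self_mem_fl (AffineSubspace.mem_top _ _ _)
  have hpQ : p ∈ Q := ⟨hp, (hiff p hp).2 hpF⟩
  have hspan : affineSpan ℝ Q ≤ F := affineSpan_le.2 fun z hz => (hiff z hz.1).1 hz.2
  refine ⟨Q, Or.inr ⟨⟨p, hpQ⟩, φ, hgr.bddAbove, rfl⟩, ?_⟩
  rw [mem_intrinsicInterior]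
  refine ⟨⟨p, subset_affineSpan ℝ Q hpQ⟩, ?_, rfl⟩
  rw [mem_interior_iff_mem_nhds]
  have hc : Filter.Tendsto (fun y : affineSpan ℝ Q => (y : V n))
      (nhds ⟨p, subset_affineSpan ℝ Q hpQ⟩) (nhds p) :=
    continuous_subtype_val.tendsto (⟨p, subset_affineSpan ℝ Q hpQ⟩ : affineSpan ℝ Q)
  filter_upwards [hc.eventually (near_Cl hp)] with y hy
  have hyF : (y : V n) ∈ F := hspan y.2
  exact ⟨hy hyF, (hiff _ (hy hyF)).2 hyF⟩

lemma projSet_iff (A T : Finset (AffForm n)) (k : ℕ) (x : V n) :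
    x ∈ projSet (Cl ⊤ A T) k ↔ ∃ p ∈ nearestPts (Cl ⊤ A T) x, typ ⊤ A p = k := by
  constructor
  · rintro ⟨p, hp, Q, hQ, hd, hpQ⟩
    refine ⟨p, hp, ?_⟩
    rw [← hd]
    unfold typ dm dimS
    rw [face_dim hp.1 hQ hpQ]
  · rintro ⟨p, hp, h⟩
    obtain ⟨Q, hQ, hpQ⟩ := face_exists hp.1
    refine ⟨p, hp, Q, hQ, ?_, hpQ⟩
    rw [← h]
    unfold typ dm dimS
    rw [face_dim hp.1 hQ hpQ]

/-! ### Genericity holds almost everywhere -/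

lemma gen_ae (A : Finset (AffForm n)) : ∀ᵐ x : V n, Gen x ⊤ A := by
  have h : ∀ S ∈ A.powerset, ∀ ℓ ∈ A, ∀ᵐ x : V n, ∀ p ∈ fl ⊤ S,
      (∀ z ∈ fl ⊤ S, inner ℝ (x - p) (z - p) = 0) → ℓ p = 0 → ∀ z ∈ fl ⊤ S, ℓ z = 0 := by
    intro S _ ℓ _
    by_cases hz : ∀ z ∈ fl ⊤ S, ℓ z = 0
    · exact Filter.Eventually.of_forall fun x p _ _ _ => hz
    · push Not at hz
      obtain ⟨z, hz, hz0⟩ := hz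
      have : Nonempty (fl (⊤ : AffineSubspace ℝ (V n)) S) := ⟨⟨z, hz⟩⟩
      set F := fl (⊤ : AffineSubspace ℝ (V n)) S with hF
      set h : AffForm n := ℓ.comp (F.subtype.comp
        (EuclideanGeometry.orthogonalProjection F : V n →ᵃ[ℝ] F)) with hh
      have hval : ∀ x p, p ∈ F → (∀ z ∈ F, inner ℝ (x - p) (z - p) = 0) → h x = ℓ p := by
        intro x p hp hx
        have : (EuclideanGeometry.orthogonalProjection F x : V n) = p := by
          rw [EuclideanGeometry.coe_orthogonalProjection_eq_iff_mem]
          refine ⟨hp, ?_⟩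
          rw [Submodule.mem_orthogonal']
          intro u hu
          have := hx _ (AffineSubspace.vadd_mem_of_mem_direction hu hp)
          simpa using this
        simp [hh, this]
      have hnull : volume ((fl (⊤ : AffineSubspace ℝ (V n)) {h} : AffineSubspace ℝ (V n)) : Set (V n)) = 0 := by
        apply Measure.addHaar_affineSubspace
        intro htop
        have hzm : z ∈ fl (⊤ : AffineSubspace ℝ (V n)) {h} := by rw [htop]; trivial
        have h1 := hzm.2 h (by simp)
        rw [hval z z hz (fun w _ => by simp)] at h1
        exact hz0 h1
      have hae := measure_eq_zero_iff_ae_notMem.1 hnull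
      filter_upwards [hae] with x hx p hp hproj hp0
      exfalso
      apply hx
      refine ⟨trivial, fun a ha => ?_⟩
      rw [mem_singleton] at ha
      subst ha
      rw [hval x p hp hproj, hp0]
  have h2 : ∀ᵐ x : V n, ∀ S ∈ A.powerset, ∀ ℓ ∈ A, ∀ p ∈ fl ⊤ S,
      (∀ z ∈ fl ⊤ S, inner ℝ (x - p) (z - p) = 0) → ℓ p = 0 → ∀ z ∈ fl ⊤ S, ℓ z = 0 := by
    rw [Filter.eventually_all_finset]
    intro S hS
    rw [Filter.eventually_all_finset]
    exact h S hS
  filter_upwards [h2] with x hx S hS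
  exact hx S (mem_powerset.2 hS)

/-! ### Measurability -/

lemma typ_measurable (A : Finset (AffForm n)) (k : ℕ) :
    MeasurableSet {p : V n | typ ⊤ A p = k} := by
  classical
  have : {p : V n | typ ⊤ A p = k} = ⋃ S ∈ A.powerset.filter (fun S => dm (fl ⊤ S) = k),
      ⋂ ℓ ∈ A, {p : V n | ℓ p = 0 ↔ ℓ ∈ S} := by
    ext p
    simp only [Set.mem_ofPred_eq, Set.mem_iUnion, Set.mem_iInter, mem_filter, mem_powerset,
      exists_prop]
    constructor
    · intro h
      refine ⟨zs A p, ⟨fun ℓ hℓ => (mem_zs.1 hℓ).1, h⟩, fun ℓ hℓ => ?_⟩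
      rw [mem_zs]; tauto
    · rintro ⟨S, ⟨hS, h⟩, h2⟩
      have : zs A p = S := by
        ext ℓ
        rw [mem_zs]
        constructor
        · rintro ⟨a, b⟩; exact (h2 ℓ a).1 b
        · intro a; exact ⟨hS a, (h2 ℓ (hS a)).2 a⟩
      unfold typ; rw [this, h]
  rw [this]
  refine Finset.measurableSet_biUnion _ fun S _ => Finset.measurableSet_biInter _ fun ℓ _ => ?_
  have hm : MeasurableSet {p : V n | ℓ p = 0} :=
    (isClosed_eq (aff_cont ℓ) continuous_const).measurableSet
  by_cases h : ℓ ∈ S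
  · simpa [h] using hm
  · convert hm.compl using 1
    ext p; simp [h]

lemma projSet_measurable (A T : Finset (AffForm n)) (k : ℕ) :
    MeasurableSet (projSet (Cl ⊤ A T) k) := by
  by_cases hne : (Cl ⊤ A T).Nonempty
  · choose f hf using nearest_exists (Cl_convex ⊤ A T) (Cl_closed ⊤ A T) hne
    have hL : LipschitzWith 1 f := LipschitzWith.of_dist_le_mul fun x y => by
      rw [dist_eq_norm, dist_eq_norm, NNReal.coe_one, one_mul]
      exact nearest_lip (Cl_convex ⊤ A T) (hf x) (hf y)
    have : projSet (Cl ⊤ A T) k = f ⁻¹' {p : V n | typ ⊤ A p = k} := by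
      ext x
      rw [projSet_iff]
      constructor
      · rintro ⟨p, hp, h⟩
        rw [nearest_unique (Cl_convex ⊤ A T) hp (hf x)] at h
        exact h
      · intro h
        exact ⟨f x, hf x, h⟩
    rw [this]
    exact hL.continuous.measurable (typ_measurable A k)
  · convert MeasurableSet.empty using 1
    ext x
    rw [projSet_iff]
    simp only [Set.mem_empty_iff_false, iff_false]
    rintro ⟨p, hp, _⟩
    exact hne ⟨p, hp.1⟩

/-! ### Chambers -/

open Classical in
/-- The set of functionals positive on `C`. -/
def pos (A : Finset (AffForm n)) (C : Face A) : Finset (AffForm n) :=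
  A.filter (fun ℓ => ∃ h : ℓ ∈ A, C.sgn ⟨ℓ, h⟩ = 1)

lemma mem_pos {A : Finset (AffForm n)} {C : Face A} (ℓ : Idx A) :
    ℓ.1 ∈ pos A C ↔ C.sgn ℓ = 1 := by
  simp [pos, ℓ.2]

lemma sgn_cases (s : SignType) (h : s ≠ 0) : s = 1 ∨ s = -1 := by
  revert h; revert s; decide

lemma carrier_eq {A : Finset (AffForm n)} {C : Face A} (hC : IsChamber A C) :
    C.carrier = Op ⊤ A (pos A C) := by
  ext y
  unfold Face.carrier faceSet
  rw [mem_Op, Set.mem_ofPred_eq]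
  constructor
  · intro h
    refine ⟨trivial, fun ℓ hℓ => ?_⟩
    have h1 := h ⟨ℓ, hℓ⟩
    have h2 := mem_pos (C := C) ⟨ℓ, hℓ⟩
    rcases sgn_cases _ (hC ⟨ℓ, hℓ⟩) with h3 | h3
    · refine ⟨fun _ => ?_, fun h => absurd (h2.2 h3) h⟩
      rw [h3] at h1; exact sign_eq_one_iff.1 h1
    · refine ⟨fun h => ?_, fun _ => ?_⟩
      · rw [h2.1 h] at h3; exact absurd h3 (by decide)
      · rw [h3] at h1; exact sign_eq_neg_one_iff.1 h1
  · rintro ⟨_, h⟩ ℓ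
    have h1 := h ℓ.1 ℓ.2
    rcases sgn_cases _ (hC ℓ) with h3 | h3
    · rw [h3]; exact sign_eq_one_iff.2 (h1.1 ((mem_pos ℓ).2 h3))
    · rw [h3]; refine sign_eq_neg_one_iff.2 (h1.2 fun h4 => ?_)
      rw [(mem_pos ℓ).1 h4] at h3; exact absurd h3 (by decide)

lemma closure_carrier {A : Finset (AffForm n)} {C : Face A} (hC : IsChamber A C) :
    closure C.carrier = Cl ⊤ A (pos A C) := by
  rw [carrier_eq hC]
  apply subset_antisymm
  · exact closure_minimal (Op_sub_Cl _ _ _) (Cl_closed _ _ _)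
  · apply Cl_sub_closure
    rw [← carrier_eq hC]
    exact C.nonempty

open Classical in
lemma chamber_sum (A : Finset (AffForm n)) (k : ℕ) (x : V n) :
    (∑ C : Face A, if IsChamber A C then
      (if x ∈ projSet (closure C.carrier) k then (1 : ℝ) else 0) else 0) = Nk x ⊤ A k := by
  unfold Nk
  have e : ∀ T, (if Ev x k (Op ⊤ A T) (Cl ⊤ A T) (typ ⊤ A) then (1 : ℝ) else 0)
      = if (Op ⊤ A T).Nonempty then (if x ∈ projSet (Cl ⊤ A T) k then (1 : ℝ) else 0) else 0 := by
    intro T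
    rw [← ite_and]
    refine if_congr ?_ rfl rfl
    rw [projSet_iff]; rfl
  rw [sum_congr rfl (fun T _ => e T), ← sum_filter (fun C => IsChamber A C),
    ← sum_filter (fun T => (Op ⊤ A T).Nonempty)]
  refine sum_bij (fun C _ => pos A C) ?_ ?_ ?_ ?_
  · intro C hC
    have hC' := (mem_filter.1 hC).2
    rw [mem_filter, mem_powerset]
    refine ⟨filter_subset _ _, ?_⟩
    rw [← carrier_eq hC']
    exact C.nonempty
  · intro C hC D hD h
    have hC' := (mem_filter.1 hC).2
    have hD' := (mem_filter.1 hD).2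
    ext ℓ : 2
    have h1 : C.sgn ℓ = 1 ↔ D.sgn ℓ = 1 := by rw [← mem_pos, ← mem_pos, h]
    rcases sgn_cases _ (hC' ℓ) with h3 | h3 <;> rcases sgn_cases _ (hD' ℓ) with h4 | h4 <;>
      rw [h3, h4] at h1 ⊢ <;> exact absurd h1 (by decide)
  · intro T hT
    rw [mem_filter, mem_powerset] at hT
    obtain ⟨hT, y, hy⟩ := hT
    have hn : ∀ ℓ : Idx A, (if ℓ.1 ∈ T then (1 : SignType) else -1) ≠ 0 := by
      intro ℓ; split_ifs <;> decide
    refine ⟨⟨fun ℓ => if ℓ.1 ∈ T then 1 else -1, ⟨y, fun ℓ => ?_⟩⟩, ?_, ?_⟩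
    · have := hy.2 ℓ.1 ℓ.2
      show SignType.sign (ℓ.1 y) = if ℓ.1 ∈ T then 1 else -1
      split_ifs with h
      · exact sign_eq_one_iff.2 (this.1 h)
      · exact sign_eq_neg_one_iff.2 (this.2 h)
    · rw [mem_filter]; exact ⟨mem_univ _, hn⟩
    · ext ℓ
      by_cases hℓ : ℓ ∈ A
      · rw [mem_pos ⟨ℓ, hℓ⟩]
        by_cases h : ℓ ∈ T
        · simp [h]
        · simp only [h, if_false, iff_false]; decide
      · constructor
        · intro h; exact absurd (mem_filter.1 h).1 hℓ
        · intro h; exact absurd (hT h) hℓ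
  · intro C hC
    rw [closure_carrier (mem_filter.1 hC).2]

lemma direction_top_dm : dm (⊤ : AffineSubspace ℝ (V n)) = n := by
  unfold dm
  rw [AffineSubspace.direction_top, finrank_top]
  simp

open Classical in
lemma vol_sum (A : Finset (AffForm n)) (v : Face A → ℕ → ℝ)
    (hv : ∀ F : Face A, HasIntrinsicVolumes (closure (Face.carrier A F)) (v F)) (k : ℕ) :
    (∑ C : Face A, if IsChamber A C then v C k else 0) = (-1) ^ (n + k) * Wh ⊤ A k := by
  set c : ℝ := (-1) ^ (n + k) * Wh ⊤ A k with hc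
  have hpt : ∀ᵐ x : V n, (∑ C : Face A, if IsChamber A C then
      (if x ∈ projSet (closure C.carrier) k then (1 : ℝ) else 0) else 0) = c := by
    filter_upwards [gen_ae A] with x hx
    rw [chamber_sum, hc, main_count x A k ⊤ hx, direction_top_dm, ← mul_assoc, ← mul_pow]
    simp
  have hlim : Filter.Tendsto (fun R : ℝ => ∑ C : Face A, if IsChamber A C then
      (volume (projSet (closure C.carrier) k ∩ Metric.ball (0 : V n) R)).toReal /
        (volume (Metric.ball (0 : V n) R)).toReal else 0) Filter.atTop
      (nhds (∑ C : Face A, if IsChamber A C then v C k else 0)) := by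
    apply tendsto_finsetSum
    intro C _
    by_cases h : IsChamber A C
    · simp only [if_pos h]; exact hv C k
    · simp only [if_neg h]; exact tendsto_const_nhds
  refine tendsto_nhds_unique hlim (Filter.Tendsto.congr' ?_ tendsto_const_nhds)
  filter_upwards [Filter.eventually_gt_atTop 0] with R hR
  have hB : 0 < (volume (Metric.ball (0 : V n) R)).toReal :=
    ENNReal.toReal_pos (Metric.measure_ball_pos _ _ hR).ne' measure_ball_lt_top.ne
  have hfin : IsFiniteMeasure (volume.restrict (Metric.ball (0 : V n) R)) :=
    ⟨by rw [Measure.restrict_apply_univ]; exact measure_ball_lt_top⟩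
  have hIntg : ∀ C : Face A, IsChamber A C →
      Integrable (fun x => if x ∈ projSet (closure C.carrier) k then (1 : ℝ) else 0)
        (volume.restrict (Metric.ball (0 : V n) R)) ∧
      ∫ x in Metric.ball (0 : V n) R, (if x ∈ projSet (closure C.carrier) k then (1 : ℝ) else 0)
        = (volume (projSet (closure C.carrier) k ∩ Metric.ball (0 : V n) R)).toReal := by
    intro C hC
    have hm : MeasurableSet (projSet (closure C.carrier) k) := by
      rw [closure_carrier hC]; exact projSet_measurable _ _ _
    have e : (fun x => if x ∈ projSet (closure C.carrier) k then (1 : ℝ) else 0)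
        = (projSet (closure C.carrier) k).indicator (fun _ => (1 : ℝ)) := by
      ext x; simp [Set.indicator_apply]
    rw [e]
    constructor
    · exact (integrable_const 1).indicator hm
    · rw [integral_indicator hm]
      simp [Measure.real, Measure.restrict_restrict hm]
  have h1 : ∫ x in Metric.ball (0 : V n) R, (∑ C : Face A, if IsChamber A C then
      (if x ∈ projSet (closure C.carrier) k then (1 : ℝ) else 0) else 0)
      = c * (volume (Metric.ball (0 : V n) R)).toReal := by
    rw [integral_congr_ae (ae_restrict_of_ae hpt)]
    simp [Measure.real, mul_comm]
  rw [integral_finset_sum] at h1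
  · have h2 : ∀ C : Face A, (∫ x in Metric.ball (0 : V n) R, if IsChamber A C then
        (if x ∈ projSet (closure C.carrier) k then (1 : ℝ) else 0) else 0)
        = if IsChamber A C then
          (volume (projSet (closure C.carrier) k ∩ Metric.ball (0 : V n) R)).toReal else 0 := by
      intro C
      by_cases h : IsChamber A C
      · simp only [if_pos h]; exact (hIntg C h).2
      · simp only [if_neg h]; simp
    rw [sum_congr rfl (fun C _ => h2 C)] at h1
    rw [← mul_div_cancel_right₀ c hB.ne', ← h1, sum_div]
    refine sum_congr rfl fun C _ => ?_
    split_ifs <;> simp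
  · intro C _
    by_cases h : IsChamber A C
    · simp only [if_pos h]; exact (hIntg C h).1
    · simp only [if_neg h]; exact integrable_zero _ _ _

/-! ### Whitney's formula for the Möbius function -/

lemma fl_isFlat (A S : Finset (AffForm n)) (hS : S ⊆ A)
    (hne : (fl ⊤ S : Set (V n)).Nonempty) : IsFlat A (fl ⊤ S : Set (V n)) := by
  refine ⟨hne, fun ℓ => ℓ.1 ∈ S, ?_⟩
  ext y
  simp only [SetLike.mem_coe, mem_fl, Set.mem_iInter, Set.mem_ofPred_eq, hypSet]
  constructor
  · rintro ⟨_, h⟩ ℓ hℓ; exact h ℓ.1 hℓ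
  · intro h; exact ⟨trivial, fun ℓ hℓ => h ⟨ℓ, hS hℓ⟩ hℓ⟩

open Classical in
/-- Whitney's expression for `μ(Y, ⊤)`. -/
def gW (A : Finset (AffForm n)) (Y : Flat A) : ℝ :=
  ∑ S ∈ A.powerset, if (fl ⊤ S : Set (V n)) = Y.1 then (-1) ^ S.card else 0

open Classical in
/-- Sums of `gW` over flats satisfying a predicate on point sets. -/
lemma gW_sum (A : Finset (AffForm n)) (P : Set (V n) → Prop) :
    (∑ Y : Flat A, if P Y.1 then gW A Y else 0)
      = ∑ S ∈ A.powerset, if (fl ⊤ S : Set (V n)).Nonempty ∧ P (fl ⊤ S : Set (V n))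
          then (-1) ^ S.card else 0 := by
  have : ∀ Y : Flat A, (if P Y.1 then gW A Y else 0)
      = ∑ S ∈ A.powerset, if (fl ⊤ S : Set (V n)) = Y.1 ∧ P (fl ⊤ S : Set (V n))
          then (-1) ^ S.card else 0 := by
    intro Y
    unfold gW
    by_cases h : P Y.1
    · rw [if_pos h]
      refine sum_congr rfl fun S _ => if_congr ?_ rfl rfl
      exact ⟨fun e => ⟨e, e ▸ h⟩, fun e => e.1⟩
    · rw [if_neg h]
      symm
      refine sum_eq_zero fun S _ => if_neg ?_
      rintro ⟨e, h'⟩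
      exact h (e ▸ h')
  rw [sum_congr rfl (fun Y _ => this Y), sum_comm]
  refine sum_congr rfl fun S hS => ?_
  by_cases hne : (fl ⊤ S : Set (V n)).Nonempty
  · set Y₀ : Flat A := ⟨_, fl_isFlat A S (mem_powerset.1 hS) hne⟩ with hY
    rw [sum_eq_single Y₀]
    · refine if_congr ?_ rfl rfl
      exact ⟨fun h => ⟨hne, h.2⟩, fun h => ⟨rfl, h.2⟩⟩
    · intro Y _ hYne
      refine if_neg ?_
      rintro ⟨e, _⟩
      exact hYne (Subtype.ext e.symm)
    · intro h; exact absurd (mem_univ _) h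
  · rw [if_neg (fun h => hne h.1)]
    refine sum_eq_zero fun Y _ => if_neg ?_
    rintro ⟨e, _⟩
    exact hne (e ▸ Y.2.1)

open Classical in
lemma gW_zeta (A : Finset (AffForm n)) (hA : ∀ ℓ ∈ A, ℓ.linear ≠ 0) (X : Flat A) :
    (∑ Z : Flat A, if X ≤ Z then gW A Z else 0) = if X = topFlat A then 1 else 0 := by
  have h1 := gW_sum A (fun s => X.1 ⊆ s)
  have e0 : (∑ Z : Flat A, if X ≤ Z then gW A Z else 0)
      = ∑ Z : Flat A, if X.1 ⊆ Z.1 then gW A Z else 0 := rfl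
  rw [e0, h1, ← sum_filter]
  have e1 : A.powerset.filter (fun S => (fl ⊤ S : Set (V n)).Nonempty ∧ X.1 ⊆ (fl ⊤ S : Set (V n)))
      = (A.filter (fun ℓ => X.1 ⊆ hypSet ℓ)).powerset := by
    ext S
    simp only [mem_filter, mem_powerset]
    constructor
    · rintro ⟨hS, _, h⟩ ℓ hℓ
      exact mem_filter.2 ⟨hS hℓ, fun y hy => (h hy).2 ℓ hℓ⟩
    · intro h
      have h2 : X.1 ⊆ (fl ⊤ S : Set (V n)) := fun y hy =>
        ⟨trivial, fun ℓ hℓ => (mem_filter.1 (h hℓ)).2 hy⟩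
      exact ⟨fun ℓ hℓ => (mem_filter.1 (h hℓ)).1, X.2.1.mono h2, h2⟩
  rw [e1]
  have h2 := sum_powerset_neg_one_pow_card (x := A.filter (fun ℓ => X.1 ⊆ hypSet ℓ))
  have h3 : (∑ S ∈ (A.filter (fun ℓ => X.1 ⊆ hypSet ℓ)).powerset, (-1 : ℝ) ^ S.card)
      = if A.filter (fun ℓ => X.1 ⊆ hypSet ℓ) = ∅ then 1 else 0 := by
    have := congrArg (Int.cast : ℤ → ℝ) h2
    push_cast at this
    exact this
  rw [h3]
  refine if_congr ?_ rfl rfl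
  constructor
  · intro h
    apply Subtype.ext
    rw [flat_eq_inter A X]
    ext y
    simp only [Set.mem_iInter, topFlat, Set.mem_univ, iff_true]
    intro ℓ hℓ
    exact absurd (mem_filter.2 ⟨ℓ.2, hℓ⟩) (by rw [h]; simp)
  · rintro rfl
    rw [filter_eq_empty_iff]
    intro ℓ hℓ h
    apply hA ℓ hℓ
    ext v
    have h0 : ℓ v = 0 := h (Set.mem_univ v)
    have h1 : ℓ 0 = 0 := h (Set.mem_univ 0)
    have := AffineMap.linearMap_vsub ℓ v 0
    rw [h0, h1] at this
    simpa using this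

open Classical in
lemma moebius_eq (A : Finset (AffForm n)) (hA : ∀ ℓ ∈ A, ℓ.linear ≠ 0)
    (μ : Flat A → Flat A → ℝ) (hμ : IsMoebius A μ) (X : Flat A) :
    μ X (topFlat A) = gW A X := by
  have hD : ∀ Y : Flat A, (∑ Z : Flat A, if X ≤ Z ∧ Z ≤ Y then μ X Z else 0)
      = if X = Y then 1 else 0 := by
    intro Y
    by_cases hXY : X = Y
    · subst hXY
      rw [if_pos rfl, sum_eq_single X]
      · rw [if_pos ⟨le_rfl, le_rfl⟩, hμ.1]
      · intro Z _ hZ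
        exact if_neg fun h => hZ (le_antisymm h.2 h.1)
      · intro h; exact absurd (mem_univ _) h
    · rw [if_neg hXY]
      by_cases hle : X ≤ Y
      · exact hμ.2.1 X Y (lt_of_le_of_ne hle hXY)
      · exact sum_eq_zero fun Z _ => if_neg fun h => hle (h.1.trans h.2)
  have h1 : gW A X = ∑ Y : Flat A, (if X = Y then 1 else 0) * gW A Y := by simp
  have htop : X ≤ topFlat A := fun y _ => Set.mem_univ y
  symm
  calc gW A X = ∑ Y : Flat A, (if X = Y then 1 else 0) * gW A Y := h1
    _ = ∑ Y : Flat A, ∑ Z : Flat A, (if X ≤ Z ∧ Z ≤ Y then μ X Z else 0) * gW A Y := by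
        refine sum_congr rfl fun Y _ => ?_
        rw [← hD Y, sum_mul]
    _ = ∑ Z : Flat A, (if X ≤ Z then μ X Z else 0) * ∑ Y : Flat A, if Z ≤ Y then gW A Y else 0 := by
        rw [sum_comm]
        refine sum_congr rfl fun Z _ => ?_
        rw [mul_sum]
        refine sum_congr rfl fun Y _ => ?_
        by_cases a : X ≤ Z <;> by_cases b : Z ≤ Y <;> simp [a, b]
    _ = ∑ Z : Flat A, (if X ≤ Z then μ X Z else 0) * if Z = topFlat A then 1 else 0 := by
        refine sum_congr rfl fun Z _ => ?_
        rw [gW_zeta A hA]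
    _ = μ X (topFlat A) := by simp [htop]

lemma dim_ge (A : Finset (AffForm n)) (d : ℕ) (hd : ∀ X : Flat A, IsMin X → dimS X.1 = d)
    (X : Flat A) : d ≤ dimS X.1 := by
  obtain ⟨m, hm, hmin⟩ := (Set.toFinite {Y : Flat A | Y ≤ X}).exists_minimal ⟨X, le_refl X⟩
  have hm' : m ≤ X := hm
  have : IsMin m := fun Y hY => hmin (show Y ≤ X from hY.trans hm') hY
  rw [← hd m this]
  exact Submodule.finrank_mono (vectorSpan_mono ℝ hm')

/-- `if_congr` with decidability instances taken by unification. -/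
lemma ite_cg {P Q : Prop} {iP : Decidable P} {iQ : Decidable Q} (h : P ↔ Q) (a b : ℝ) :
    @ite ℝ P iP a b = @ite ℝ Q iQ a b := by
  by_cases hP : P
  · rw [if_pos hP, if_pos (h.1 hP)]
  · rw [if_neg hP, if_neg (fun hq => hP (h.2 hq))]

open Classical in
/-- **Klivans–Swartz relation.** For `0 ≤ j ≤ rk 𝒜`, the coefficient of `t^j` in the
characteristic polynomial `χ(𝒜, t) = Σ_Y μ(Y,⊤) t^{rk Y}`, namely
`Σ_{Y : rk Y = j} μ(Y, ⊤)`, equals `(-1)^{rk 𝒜 - j} Σ_C v_{j+d}(cl C)`,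
the sum over all chambers `C`. -/
theorem klivans_swartz {n : ℕ} (𝒜 : Finset (AffForm n))
    (h𝒜 : ∀ ℓ ∈ 𝒜, ℓ.linear ≠ 0)
    (d : ℕ) (hd : ∀ X : Flat 𝒜, IsMin X → dimS X.1 = d)
    (μ : Flat 𝒜 → Flat 𝒜 → ℝ) (hμ : IsMoebius 𝒜 μ)
    (v : Face 𝒜 → ℕ → ℝ)
    (hv : ∀ F : Face 𝒜, HasIntrinsicVolumes (closure (Face.carrier 𝒜 F)) (v F))
    (j : ℕ) (hj : j ≤ n - d) :
    (∑ Y : Flat 𝒜, if dimS Y.1 - d = j then μ Y (topFlat 𝒜) else 0)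
      = (-1 : ℝ) ^ ((n - d) - j) *
          ∑ C : Face 𝒜, if IsChamber 𝒜 C then v C (j + d) else 0 := by
  have hn : dimS (topFlat 𝒜).1 = n := by
    have : dimS (topFlat 𝒜).1 = dm (⊤ : AffineSubspace ℝ (V n)) := rfl
    rw [this, direction_top_dm]
  have hdn : d ≤ n := by
    have := dim_ge 𝒜 d hd (topFlat 𝒜)
    rwa [hn] at this
  have h1 : (∑ Y : Flat 𝒜, if dimS Y.1 - d = j then μ Y (topFlat 𝒜) else 0)
      = Wh ⊤ 𝒜 (j + d) := by
    have hg := gW_sum 𝒜 (fun s => dimS s - d = j)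
    refine Eq.trans (sum_congr rfl fun Y _ => ?_) (hg.trans ?_)
    · rw [moebius_eq 𝒜 h𝒜 μ hμ Y]
      exact ite_cg Iff.rfl _ _
    unfold Wh
    refine sum_congr rfl fun S hS => ite_cg (and_congr_right fun hne => ?_) _ _
    have h := dim_ge 𝒜 d hd ⟨_, fl_isFlat 𝒜 S (mem_powerset.1 hS) hne⟩
    have e : dm (fl ⊤ S) = dimS (fl ⊤ S : Set (V n)) := rfl
    rw [e]
    change d ≤ dimS (fl ⊤ S : Set (V n)) at h
    omega
  rw [h1, vol_sum 𝒜 v hv (j + d), ← mul_assoc, ← pow_add]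
  have h2 : n - d - j + (n + (j + d)) = 2 * n := by omega
  rw [h2, pow_mul]
  simp

end CharElts
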